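/- Let m be a positive integer, S ⊂ ℤᵐ a finite set, and q : ℝᵐ → ℂ a 1-periodic trigonometric polynomial with frequencies in S, i.e. q(z) = Σ_{k ∈ S} a_k exp(2πi⟨k, z⟩). Let h : ℝᵐ → ℝ be continuous, 1-periodic in each coordinate, and nonnegative. Then there exist finitely many 1-periodic complex trigonometric polynomials p₁, …, p_J with frequencies in S such that for all x ∈ ℝᵐ: ∫_{[0,1]^m} |q(x − y)|² h(y) dy = Σ_{j=1}^{J} |p_j(x)|². -/

import Mathlib

open MeasureTheory

/-- `trigChar k z = exp(2πi⟨k, z⟩)`, the complex exponential with frequency `k ∈ ℤᵐ`. -/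
noncomputable def trigChar {m : ℕ} (k : Fin m → ℤ) (z : Fin m → ℝ) : ℂ :=
  Complex.exp (2 * (Real.pi : ℂ) * Complex.I * ∑ i, (k i : ℂ) * (z i : ℂ))

/-!
By the character property, `q (x - y) * √(h y) = ∑ k ∈ S, (a k * χ_k x) * (√(h y) * χ_k (-y))` with
`χ_k = trigChar k`. For fixed `x` this is a linear combination in `L²(dy)` of functions independent
of `x`, with coefficients `a k * χ_k x`, and the integral is its squared norm. Expanding that norm
in an orthonormal basis of their finite-dimensional span gives one `p_j` for each basis vector.
-/

lemma exists_sq_norm_sum_smul_eq_sum {𝕜 E ι : Type*} [RCLike 𝕜] [NormedAddCommGroup E]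
    [InnerProductSpace 𝕜 E] (s : Finset ι) (F : ι → E) :
    ∃ (J : ℕ) (c : Fin J → ι → 𝕜), ∀ v : ι → 𝕜,
      ‖∑ k ∈ s, v k • F k‖ ^ 2 = ∑ j, ‖∑ k ∈ s, c j k * v k‖ ^ 2 := by
  classical
  let V : Submodule 𝕜 E := Submodule.span 𝕜 (s.image F)
  let b := stdOrthonormalBasis 𝕜 V
  refine ⟨_, fun j k ↦ inner 𝕜 (b j : E) (F k), fun v ↦ ?_⟩
  have hV : ∑ k ∈ s, v k • F k ∈ V := V.sum_smul_mem v fun k hk ↦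
    Submodule.subset_span (Finset.mem_image_of_mem F hk)
  calc ‖∑ k ∈ s, v k • F k‖ ^ 2
      = ∑ j, ‖inner 𝕜 (b j : E) (∑ k ∈ s, v k • F k)‖ ^ 2 :=
        (b.sum_sq_norm_inner_right ⟨_, hV⟩).symm
    _ = ∑ j, ‖∑ k ∈ s, inner 𝕜 (b j : E) (F k) * v k‖ ^ 2 := by
        simp only [inner_sum, inner_smul_right, mul_comm]

section L2

variable {α E : Type*} [MeasurableSpace α] {μ : Measure α} [NormedAddCommGroup E]

lemma sq_norm_Lp_two_eq_integral (f : Lp E 2 μ) : ‖f‖ ^ 2 = ∫ y, ‖f y‖ ^ 2 ∂μ := by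
  have hnonneg : 0 ≤ ∫ y, ‖f y‖ ^ 2 ∂μ := integral_nonneg fun y ↦ sq_nonneg ‖f y‖
  rw [Lp.norm_def, toReal_eLpNorm (Lp.aestronglyMeasurable f),
    lpNorm_eq_integral_norm_rpow_toReal two_ne_zero ENNReal.ofNat_ne_top
      (Lp.aestronglyMeasurable f)]
  simp only [ENNReal.toReal_ofNat, Real.rpow_ofNat]
  rw [← one_div, ← Real.sqrt_eq_rpow, Real.sq_sqrt hnonneg]

lemma exists_integral_sq_norm_sum_smul_eq_sum {𝕜 ι : Type*} [RCLike 𝕜] [InnerProductSpace 𝕜 E]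
    (s : Finset ι) {f : ι → α → E} (hf : ∀ k, MemLp (f k) 2 μ) :
    ∃ (J : ℕ) (c : Fin J → ι → 𝕜), ∀ v : ι → 𝕜,
      ∫ y, ‖∑ k ∈ s, v k • f k y‖ ^ 2 ∂μ = ∑ j, ‖∑ k ∈ s, c j k * v k‖ ^ 2 := by
  obtain ⟨J, c, hc⟩ := exists_sq_norm_sum_smul_eq_sum (𝕜 := 𝕜) s fun k ↦ (hf k).toLp (f k)
  refine ⟨J, c, fun v ↦ ?_⟩
  have hrepr : ∀ᵐ y ∂μ, (∑ k ∈ s, v k • (hf k).toLp (f k) : Lp E 2 μ) y =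
      ∑ k ∈ s, v k • f k y := by
    have hterm : ∀ᵐ y ∂μ, ∀ k ∈ s, (v k • (hf k).toLp (f k) : Lp E 2 μ) y = v k • f k y :=
      (Filter.eventually_all_finset s).2 fun k _ ↦ by
        filter_upwards [Lp.coeFn_smul (v k) ((hf k).toLp (f k)), (hf k).coeFn_toLp]
          with y hsmul hf_y
        rw [hsmul, Pi.smul_apply, hf_y]
    filter_upwards [Lp.coeFn_fun_finsetSum s fun k ↦ v k • (hf k).toLp (f k), hterm]
      with y hsum hterm_y
    rw [hsum, Finset.sum_congr rfl hterm_y]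
  rw [← hc, sq_norm_Lp_two_eq_integral]
  exact integral_congr_ae (hrepr.mono fun y hy ↦ by simp only [hy])

lemma memLp_two_sqrt {h : α → ℝ} (hint : Integrable h μ) : MemLp (fun y ↦ √(h y)) 2 μ := by
  rw [memLp_two_iff_integrable_sq (Real.continuous_sqrt.comp_aestronglyMeasurable hint.1)]
  simpa only [Real.sq_sqrt'] using hint.pos_part

end L2

section TrigChar

variable {m : ℕ} (k : Fin m → ℤ)

lemma trigChar_add (x y : Fin m → ℝ) : trigChar k (x + y) = trigChar k x * trigChar k y := by
  simp only [trigChar, ← Complex.exp_add, ← mul_add, ← Finset.sum_add_distrib, Pi.add_apply,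
    Complex.ofReal_add]

lemma norm_trigChar (z : Fin m → ℝ) : ‖trigChar k z‖ = 1 := by
  have hexponent : 2 * (Real.pi : ℂ) * Complex.I * ∑ i, (k i : ℂ) * (z i : ℂ) =
      (2 * Real.pi * ∑ i, k i * z i : ℝ) * Complex.I := by
    push_cast
    ring
  rw [trigChar, hexponent, Complex.norm_exp_ofReal_mul_I]

@[fun_prop]
lemma continuous_trigChar : Continuous (trigChar k) := by
  unfold trigChar
  fun_prop

lemma memLp_two_sqrt_smul_trigChar_neg {μ : Measure (Fin m → ℝ)} {h : (Fin m → ℝ) → ℝ}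
    (hint : Integrable h μ) : MemLp (fun y ↦ √(h y) • trigChar k (-y)) 2 μ := by
  have hsqrt := memLp_two_sqrt hint
  have hchar : Continuous fun y ↦ trigChar k (-y) := by fun_prop
  refine hsqrt.of_le (hsqrt.1.smul hchar.aestronglyMeasurable) (.of_forall fun y ↦ ?_)
  rw [norm_smul, norm_trigChar, mul_one]

end TrigChar

theorem kernel_operator_sos_general {m : ℕ} (S : Finset (Fin m → ℤ)) (a : (Fin m → ℤ) → ℂ)
    {μ : Measure (Fin m → ℝ)} {h : (Fin m → ℝ) → ℝ} (hint : Integrable h μ)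
    (hnn : ∀ᵐ y ∂μ, 0 ≤ h y) :
    ∃ (J : ℕ) (p : Fin J → (Fin m → ℝ) → ℂ),
      (∀ j, ∃ c : (Fin m → ℤ) → ℂ, ∀ z, p j z = ∑ k ∈ S, c k * trigChar k z) ∧
      ∀ x : Fin m → ℝ,
        ∫ y, ‖∑ k ∈ S, a k * trigChar k (x - y)‖ ^ 2 * h y ∂μ = ∑ j, ‖p j x‖ ^ 2 := by
  obtain ⟨J, c, hc⟩ := exists_integral_sq_norm_sum_smul_eq_sum (𝕜 := ℂ) S
    fun k ↦ memLp_two_sqrt_smul_trigChar_neg k hint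
  refine ⟨J, fun j z ↦ ∑ k ∈ S, c j k * a k * trigChar k z, fun j ↦ ⟨_, fun _ ↦ rfl⟩,
    fun x ↦ ?_⟩
  have hsplit (y : Fin m → ℝ) : ∑ k ∈ S, (a k * trigChar k x) • √(h y) • trigChar k (-y) =
      √(h y) • ∑ k ∈ S, a k * trigChar k (x - y) := by
    rw [Finset.smul_sum]
    refine Finset.sum_congr rfl fun k _ ↦ ?_
    rw [smul_comm, smul_eq_mul, mul_assoc, ← trigChar_add, ← sub_eq_add_neg]
  calc ∫ y, ‖∑ k ∈ S, a k * trigChar k (x - y)‖ ^ 2 * h y ∂μ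
      = ∫ y, ‖∑ k ∈ S, (a k * trigChar k x) • √(h y) • trigChar k (-y)‖ ^ 2 ∂μ :=
        integral_congr_ae <| hnn.mono fun y hy ↦ by
          simp only [hsplit, norm_smul, mul_pow, Real.norm_eq_abs, sq_abs, Real.sq_sqrt hy,
            mul_comm]
    _ = ∑ j, ‖∑ k ∈ S, c j k * a k * trigChar k x‖ ^ 2 := by simp only [hc, mul_assoc]

/-- the kernel operator produces sums of squares. Let `S ⊂ ℤᵐ` be finite
and `q(z) = Σ_{k ∈ S} a_k exp(2πi⟨k, z⟩)` a 1-periodic trigonometric polynomial with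
frequencies in `S`. For every continuous, 1-periodic, nonnegative `h : ℝᵐ → ℝ` there exist
finitely many complex trigonometric polynomials `p₁, …, p_J` with frequencies in `S` such
that `∫_{[0,1]^m} |q(x − y)|² h(y) dy = Σ_j |p_j(x)|²` for all `x ∈ ℝᵐ`. -/
theorem kernel_operator_sos (m : ℕ) (hm : 0 < m)
    (S : Finset (Fin m → ℤ)) (a : (Fin m → ℤ) → ℂ)
    (h : (Fin m → ℝ) → ℝ) (hcont : Continuous h)
    (hper : ∀ (z : Fin m → ℝ) (i : Fin m), h (Function.update z i (z i + 1)) = h z)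
    (hnn : ∀ z, 0 ≤ h z) :
    ∃ (J : ℕ) (p : Fin J → (Fin m → ℝ) → ℂ),
      (∀ j, ∃ c : (Fin m → ℤ) → ℂ, ∀ z, p j z = ∑ k ∈ S, c k * trigChar k z) ∧
      ∀ x : Fin m → ℝ,
        (∫ y in Set.Icc (0 : Fin m → ℝ) 1,
          ‖∑ k ∈ S, a k * trigChar k (x - y)‖ ^ 2 * h y) = ∑ j, ‖p j x‖ ^ 2 :=
  kernel_operator_sos_general S a hcont.continuousOn.integrableOn_Icc (.of_forall hnn)
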